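/- arXiv:2602.06361 — 3 statements merged into one kernel-verified Lean document; each statement's English description precedes it below -/
import Mathlib

section
/- Let μ^a, μ^b ∈ [0,1]^m with OptEnvy ≤ −Δ for some Δ > 0, and let q ≥ 1 satisfy q ≤ (1/2) m³/Δ² and q ≤ m²/(log m)². In the thresholding allocation model (with estimate variance m/q), for every fixed c > 0: P[ f(c) > −(1/5) m^{−3/2} q^{1/2} Δ² + (m/√q)·log m ] ≤ 2 exp(−(3/10)(log m)²). -/
open MeasureTheory ProbabilityTheory Real Filter
open scoped ENNReal NNReal Classical

noncomputable section

def envyAB {m : ℕ} (μa : Fin m → ℝ) (A : Finset (Fin m)) : ℝ :=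
  ∑ i ∈ Aᶜ, μa i - ∑ i ∈ A, μa i

def envyBA {m : ℕ} (μb : Fin m → ℝ) (A : Finset (Fin m)) : ℝ :=
  ∑ i ∈ A, μb i - ∑ i ∈ Aᶜ, μb i

def envy {m : ℕ} (μa μb : Fin m → ℝ) (A : Finset (Fin m)) : ℝ :=
  max (envyAB μa A) (envyBA μb A)

def optEnvy {m : ℕ} (μa μb : Fin m → ℝ) : ℝ :=
  ⨅ A : Finset (Fin m), envy μa μb A

/-- The joint law of the `2m` independent Gaussian estimates in the thresholding allocation
model: `ω (i, true) = v^a_i ~ N(μ^a_i, m/q)` and `ω (i, false) = v^b_i ~ N(μ^b_i, m/q)`. -/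
def threshMeasure (m q : ℕ) (μa μb : Fin m → ℝ) : Measure ((Fin m × Bool) → ℝ) :=
  Measure.pi fun p => gaussianReal (if p.2 then μa p.1 else μb p.1) ((m : ℝ≥0) / (q : ℝ≥0))

/-- `x_i(c) = 1` if `c v^a_i − v^b_i > 0` and `x_i(c) = −1` otherwise. -/
def xSign {m : ℕ} (c : ℝ) (ω : (Fin m × Bool) → ℝ) (i : Fin m) : ℝ :=
  if 0 < c * ω (i, true) - ω (i, false) then 1 else -1

/-- `e_a(c) = −∑ i x_i(c) μ^a_i`. -/
def eA {m : ℕ} (μa : Fin m → ℝ) (c : ℝ) (ω : (Fin m × Bool) → ℝ) : ℝ :=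
  -∑ i, xSign c ω i * μa i

/-- `e_b(c) = ∑ i x_i(c) μ^b_i`. -/
def eB {m : ℕ} (μb : Fin m → ℝ) (c : ℝ) (ω : (Fin m × Bool) → ℝ) : ℝ :=
  ∑ i, xSign c ω i * μb i

/-- `f(c) = (c e_a(c) + e_b(c))/(1+c)`. -/
def fFun {m : ℕ} (μa μb : Fin m → ℝ) (c : ℝ) (ω : (Fin m × Bool) → ℝ) : ℝ :=
  (c * eA μa c ω + eB μb c ω) / (1 + c)

/-- `e'_a(c) = −∑ i x_i(c) v^a_i`. -/
def eA' {m : ℕ} (c : ℝ) (ω : (Fin m × Bool) → ℝ) : ℝ :=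
  -∑ i, xSign c ω i * ω (i, true)

/-- `e'_b(c) = ∑ i x_i(c) v^b_i`. -/
def eB' {m : ℕ} (c : ℝ) (ω : (Fin m × Bool) → ℝ) : ℝ :=
  ∑ i, xSign c ω i * ω (i, false)

/-!
Write `d i = c * μa i - μb i`. Then `(1 + c) * fFun μa μb c` is the sum of the independent terms
`-(xSign c · i * d i)`, and `xSign c · i` is the sign of a margin with law `N(d i, (1 + c²) m / q)`.
Each term therefore equals `-|d i|`, except that it equals `|d i|` with a probability at most the
Gaussian tail `Q(u)`, where `u = |d i| / σ` and `σ = (1 + c) √(m / q)`. Near the origin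
`1 - 2 Q(u)` grows linearly in `u`, which makes the mean of the sum at most of order
`-(∑ |d i|)² / (m σ)`, and weighing the two envies by `c` and `1` gives
`∑ |d i| ≥ -(1 + c) * optEnvy μa μb`. Mills' bound `u * Q(u) ≤ φ(u)` gives `u² Q(u) ≤ 1 / 4`, so
every term has second moment `O(σ²)` around `-|d i|`, however large `d i` is, and a single
Chernoff bound finishes the proof.
-/

section ProductMeasure

variable {ι κ Ω : Type*} [Fintype ι] [Fintype κ] [MeasurableSpace Ω] (ν : ι → κ → Measure Ω)
  [∀ i j, IsProbabilityMeasure (ν i j)]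

lemma measurePreserving_curry_pi :
    MeasurePreserving (fun (ω : ι × κ → Ω) i j => ω (i, j))
      (Measure.pi fun p : ι × κ => ν p.1 p.2) (Measure.pi fun i => Measure.pi (ν i)) where
  measurable := by fun_prop
  map_eq := by
    simpa only [Measure.infinitePi_eq_pi] using! Measure.infinitePi_map_curry ν

lemma hasLaw_pi_section (i : ι) :
    HasLaw (fun (ω : ι × κ → Ω) j => ω (i, j)) (Measure.pi (ν i))
      (Measure.pi fun p : ι × κ => ν p.1 p.2) :=
  ((measurePreserving_eval (fun i => Measure.pi (ν i)) i).comp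
    (measurePreserving_curry_pi ν)).hasLaw

lemma iIndepFun_pi_section :
    iIndepFun (fun i (ω : ι × κ → Ω) j => ω (i, j)) (Measure.pi fun p : ι × κ => ν p.1 p.2) :=
  (iIndepFun_iff_hasLaw_pi_pi (hasLaw_pi_section ν)).2 (measurePreserving_curry_pi ν).hasLaw

end ProductMeasure

lemma measureReal_sum_ge_le_exp_of_iIndepFun {Ω ι : Type*} [MeasurableSpace Ω] [Fintype ι]
    {P : Measure Ω} {X : ι → Ω → ℝ} (hX : iIndepFun X P) (hm : ∀ i, Measurable (X i))
    {θ : ℝ} (hθ : 0 ≤ θ) (hint : ∀ i, Integrable (fun ω => exp (θ * X i ω)) P)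
    {φ : ι → ℝ} (hφ : ∀ i, mgf (X i) P θ ≤ exp (φ i)) (ε : ℝ) :
    P.real {ω | ε ≤ ∑ i, X i ω} ≤ exp (-θ * ε + ∑ i, φ i) := by
  have := hX.isProbabilityMeasure
  have chernoff := measure_ge_le_exp_mul_mgf (X := ∑ i, X i) ε hθ
    (hX.integrable_exp_mul_sum hm fun i _ => hint i)
  rw [hX.mgf_sum hm] at chernoff
  simp only [Finset.sum_apply] at chernoff
  refine chernoff.trans ?_
  rw [exp_add, exp_sum]
  gcongr with i
  · exact fun i _ => mgf_nonneg
  · exact hφ i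

section StandardGaussian

lemma gaussianPDFReal_zero_one (x : ℝ) :
    gaussianPDFReal 0 1 x = (√(2 * π))⁻¹ * exp (-x ^ 2 / 2) := by
  simp [gaussianPDFReal]

lemma gaussianPDFReal_zero_one_sq (x : ℝ) :
    gaussianPDFReal 0 1 x ^ 2 = exp (-x ^ 2) / (2 * π) := by
  have hexp : exp (-x ^ 2 / 2) ^ 2 = exp (-x ^ 2) := by
    rw [← exp_nat_mul, Nat.cast_two, mul_div_cancel₀ _ two_ne_zero]
  rw [gaussianPDFReal_zero_one, mul_pow, inv_pow, sq_sqrt (by positivity), hexp, div_eq_inv_mul]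

lemma hasDerivAt_gaussianPDFReal_zero_one (x : ℝ) :
    HasDerivAt (gaussianPDFReal 0 1) (-(x * gaussianPDFReal 0 1 x)) x := by
  have hexponent : HasDerivAt (fun x : ℝ => -x ^ 2 / 2) (-x) x :=
    (((hasDerivAt_pow 2 x).neg).div_const 2).congr_deriv (by norm_num; ring)
  rw [funext gaussianPDFReal_zero_one]
  exact (hexponent.exp.const_mul _).congr_deriv (by ring)

lemma tendsto_gaussianPDFReal_zero_one_atTop :
    Tendsto (gaussianPDFReal 0 1) atTop (nhds 0) := by
  have hexponent : Tendsto (fun x : ℝ => -x ^ 2 / 2) atTop atBot := by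
    simpa only [neg_div, Function.comp_def] using tendsto_neg_atTop_atBot.comp
      ((tendsto_pow_atTop two_ne_zero).atTop_div_const (zero_lt_two' ℝ))
  rw [funext gaussianPDFReal_zero_one]
  simpa using (tendsto_exp_atBot.comp hexponent).const_mul (√(2 * π))⁻¹

lemma integrable_mul_gaussianPDFReal_zero_one :
    Integrable fun x => x * gaussianPDFReal 0 1 x := by
  have hint := (integrable_mul_exp_neg_mul_sq (b := 1 / 2) (by norm_num)).const_mul (√(2 * π))⁻¹
  refine hint.congr (ae_of_all _ fun x => ?_)
  simp only [gaussianPDFReal_zero_one]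
  ring_nf

lemma setIntegral_Ioi_mul_gaussianPDFReal_zero_one (u : ℝ) :
    ∫ x in Set.Ioi u, x * gaussianPDFReal 0 1 x = gaussianPDFReal 0 1 u := by
  have hderiv (x : ℝ) (_ : x ∈ Set.Ici u) :
      HasDerivAt (-gaussianPDFReal 0 1) (x * gaussianPDFReal 0 1 x) x := by
    simpa using (hasDerivAt_gaussianPDFReal_zero_one x).neg
  have hlim : Tendsto (-gaussianPDFReal 0 1) atTop (nhds 0) := by
    simpa only [neg_zero] using! tendsto_gaussianPDFReal_zero_one_atTop.neg
  rw [integral_Ioi_of_hasDerivAt_of_tendsto' hderiv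
    integrable_mul_gaussianPDFReal_zero_one.integrableOn hlim, Pi.neg_apply, sub_neg_eq_add,
    zero_add]

lemma gaussianReal_real_eq_setIntegral (μ : ℝ) {v : ℝ≥0} (hv : v ≠ 0) (s : Set ℝ) :
    (gaussianReal μ v).real s = ∫ x in s, gaussianPDFReal μ v x := by
  rw [Measure.real, gaussianReal_apply_eq_integral μ hv, ENNReal.toReal_ofReal]
  exact integral_nonneg fun x => gaussianPDFReal_nonneg _ _ _

lemma mul_gaussianReal_real_Ici_le (u : ℝ) :
    u * (gaussianReal 0 1).real (Set.Ici u) ≤ gaussianPDFReal 0 1 u := by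
  rw [gaussianReal_real_eq_setIntegral 0 one_ne_zero, integral_Ici_eq_integral_Ioi,
    ← setIntegral_Ioi_mul_gaussianPDFReal_zero_one, ← integral_const_mul]
  refine setIntegral_mono_on ((integrable_gaussianPDFReal 0 1).const_mul u).integrableOn
    integrable_mul_gaussianPDFReal_zero_one.integrableOn measurableSet_Ioi fun x hx => ?_
  exact mul_le_mul_of_nonneg_right (le_of_lt hx) (gaussianPDFReal_nonneg _ _ _)

lemma mul_gaussianPDFReal_zero_one_le (u : ℝ) : u * gaussianPDFReal 0 1 u ≤ 1 / 4 := by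
  refine le_of_sq_le_sq ?_ (by norm_num)
  have hpeak : u ^ 2 * exp (-u ^ 2) ≤ exp (-1) := mul_exp_neg_le_exp_neg_one _
  have hconst : exp (-1) / (2 * π) ≤ (1 / 4) ^ 2 := by
    rw [exp_neg, inv_eq_one_div, div_div, div_le_iff₀ (by positivity)]
    nlinarith [exp_one_gt_d9, pi_gt_three]
  calc (u * gaussianPDFReal 0 1 u) ^ 2
      = u ^ 2 * exp (-u ^ 2) / (2 * π) := by
        rw [mul_pow, gaussianPDFReal_zero_one_sq, mul_div_assoc]
    _ ≤ exp (-1) / (2 * π) := by gcongr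
    _ ≤ (1 / 4) ^ 2 := hconst

lemma sq_mul_gaussianReal_real_Ici_le {u : ℝ} (hu : 0 ≤ u) :
    u ^ 2 * (gaussianReal 0 1).real (Set.Ici u) ≤ 1 / 4 :=
  calc u ^ 2 * (gaussianReal 0 1).real (Set.Ici u)
      = u * (u * (gaussianReal 0 1).real (Set.Ici u)) := by ring
    _ ≤ u * gaussianPDFReal 0 1 u := by gcongr; exact mul_gaussianReal_real_Ici_le u
    _ ≤ 1 / 4 := mul_gaussianPDFReal_zero_one_le u

lemma one_fifth_le_gaussianPDFReal_zero_one {x : ℝ} (hx : |x| ≤ 1) :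
    1 / 5 ≤ gaussianPDFReal 0 1 x := by
  refine le_of_sq_le_sq ?_ (gaussianPDFReal_nonneg 0 1 x)
  have hx2 : x ^ 2 ≤ 1 := (sq_le_one_iff_abs_le_one x).2 hx
  have hconst : (1 / 5) ^ 2 ≤ exp (-1) / (2 * π) := by
    rw [exp_neg, inv_eq_one_div, div_div, le_div_iff₀ (by positivity)]
    nlinarith [exp_one_lt_d9, pi_lt_d2, pi_pos]
  rw [gaussianPDFReal_zero_one_sq]
  exact hconst.trans (by gcongr)

lemma two_fifths_mul_le_gaussianReal_real_Ioo {r : ℝ} (hr0 : 0 ≤ r) (hr1 : r ≤ 1) :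
    2 / 5 * r ≤ (gaussianReal 0 1).real (Set.Ioo (-r) r) := by
  have hdensity (x : ℝ) (hx : x ∈ Set.Ioo (-r) r) : 1 / 5 ≤ gaussianPDFReal 0 1 x :=
    one_fifth_le_gaussianPDFReal_zero_one ((abs_lt.2 hx).le.trans hr1)
  rw [gaussianReal_real_eq_setIntegral 0 one_ne_zero]
  calc 2 / 5 * r = volume.real (Set.Ioo (-r) r) • (1 / 5 : ℝ) := by
        rw [volume_real_Ioo_of_le (by linarith), smul_eq_mul]; ring
    _ ≤ _ := setIntegral_ge_of_const_le measurableSet_Ioo (by simp) hdensity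
        (integrable_gaussianPDFReal 0 1).integrableOn

lemma gaussianReal_real_Iic_neg (μ : ℝ) (v : ℝ≥0) (u : ℝ) :
    (gaussianReal μ v).real (Set.Iic (-u)) = (gaussianReal (-μ) v).real (Set.Ici u) := by
  rw [← gaussianReal_map_neg, map_measureReal_apply measurable_neg measurableSet_Ici,
    Set.neg_preimage, Set.neg_Ici]

lemma gaussianReal_real_Ioo_neg_self {u : ℝ} (hu : 0 < u) :
    (gaussianReal 0 1).real (Set.Ioo (-u) u) = 1 - 2 * (gaussianReal 0 1).real (Set.Ici u) := by
  have hcompl : Set.Ioo (-u) u = (Set.Iic (-u) ∪ Set.Ici u)ᶜ := by ext; simp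
  have hdisj : Disjoint (Set.Iic (-u)) (Set.Ici u) := Set.Iic_disjoint_Ici.2 (by linarith)
  rw [hcompl, probReal_compl_eq_one_sub (measurableSet_Iic.union measurableSet_Ici),
    measureReal_union hdisj measurableSet_Ici, gaussianReal_real_Iic_neg, neg_zero, two_mul]

lemma two_fifths_mul_min_le_one_sub_two_mul_gaussianReal_real_Ici {u : ℝ} (hu : 0 < u) :
    2 / 5 * min u 1 ≤ 1 - 2 * (gaussianReal 0 1).real (Set.Ici u) := by
  rw [← gaussianReal_real_Ioo_neg_self hu]
  calc 2 / 5 * min u 1 ≤ (gaussianReal 0 1).real (Set.Ioo (-min u 1) (min u 1)) :=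
        two_fifths_mul_le_gaussianReal_real_Ioo (by positivity) (min_le_right u 1)
    _ ≤ (gaussianReal 0 1).real (Set.Ioo (-u) u) :=
        measureReal_mono (Set.Ioo_subset_Ioo (neg_le_neg (min_le_left u 1)) (min_le_left u 1))

end StandardGaussian

section SignError

/-- The decision taken on a margin: `1` if it is positive and `-1` otherwise, so that a tie counts
as `-1`, as in `xSign`. -/
def posSign (x : ℝ) : ℝ := if 0 < x then 1 else -1

lemma posSign_eq_one_or_neg_one (x : ℝ) : posSign x = 1 ∨ posSign x = -1 := by
  unfold posSign; split_ifs <;> simp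

lemma abs_posSign_mul (x d : ℝ) : |posSign x * d| = |d| := by
  rcases posSign_eq_one_or_neg_one x with h | h <;> simp [h]

@[fun_prop]
lemma measurable_posSign : Measurable posSign :=
  Measurable.ite measurableSet_Ioi measurable_const measurable_const

lemma posSign_mul_neg_iff_of_pos {d : ℝ} (hd : 0 < d) (x : ℝ) : posSign x * d < 0 ↔ x ≤ 0 := by
  unfold posSign; split_ifs with hx
  · simp [hd.le, not_le.2 hx]
  · simp [hd, not_lt.1 hx]

lemma posSign_mul_neg_iff_of_neg {d : ℝ} (hd : d < 0) (x : ℝ) : posSign x * d < 0 ↔ 0 < x := by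
  unfold posSign; split_ifs with hx
  · simp [hd, hx]
  · simp [hd.le, hx]

/-- The probability that a margin with law `N(d, v)` leads to a decision of the wrong sign. For
`d = 0` no decision counts as wrong. -/
def signErrorProb (d : ℝ) (v : ℝ≥0) : ℝ :=
  (gaussianReal d v).real {z | posSign z * d < 0}

lemma signErrorProb_nonneg (d : ℝ) (v : ℝ≥0) : 0 ≤ signErrorProb d v := measureReal_nonneg

variable {d σ : ℝ} {v : ℝ≥0}

lemma gaussianReal_eq_map_gaussianReal_zero_one (d : ℝ) (v : ℝ≥0) :
    gaussianReal d v = (gaussianReal 0 1).map fun z => √v * z + d := by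
  have hmap : ((gaussianReal 0 1).map (√v * ·)).map (· + d) = gaussianReal d v := by
    rw [gaussianReal_map_const_mul, gaussianReal_map_add_const, mul_zero, zero_add, mul_one]
    congr 1
    ext
    simp
  rw [← hmap, Measure.map_map (by fun_prop) (by fun_prop), Function.comp_def]

lemma gaussianReal_real_Iic_zero_le (hd : 0 < d) (hσ : 0 < σ) (hv : √v ≤ σ) :
    (gaussianReal d v).real (Set.Iic 0) ≤ (gaussianReal 0 1).real (Set.Ici (d / σ)) := by
  have hsub : (fun z => √v * z + d) ⁻¹' Set.Iic 0 ⊆ Set.Iic (-(d / σ)) := by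
    intro z (hz : √v * z + d ≤ 0)
    rw [Set.mem_Iic, ← neg_div, le_div_iff₀ hσ]
    have hz0 : z ≤ 0 := by
      by_contra! h
      nlinarith [sqrt_nonneg (v : ℝ)]
    nlinarith
  rw [gaussianReal_eq_map_gaussianReal_zero_one,
    map_measureReal_apply (by fun_prop) measurableSet_Iic]
  simpa only [gaussianReal_real_Iic_neg, neg_zero] using
    measureReal_mono (μ := gaussianReal 0 1) hsub

lemma signErrorProb_le (hd : d ≠ 0) (hσ : 0 < σ) (hv : √v ≤ σ) :
    signErrorProb d v ≤ (gaussianReal 0 1).real (Set.Ici (|d| / σ)) := by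
  rcases hd.lt_or_gt with hneg | hpos
  · have hsub : {z | posSign z * d < 0} ⊆ Set.Ici 0 := fun z hz =>
      ((posSign_mul_neg_iff_of_neg hneg z).1 hz).le
    calc signErrorProb d v ≤ (gaussianReal d v).real (Set.Ici 0) := measureReal_mono hsub
      _ = (gaussianReal (-d) v).real (Set.Iic 0) := by
        simpa using (gaussianReal_real_Iic_neg (-d) v 0).symm
      _ ≤ (gaussianReal 0 1).real (Set.Ici (|d| / σ)) := by
        rw [abs_of_neg hneg]
        exact gaussianReal_real_Iic_zero_le (neg_pos.2 hneg) hσ hv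
  · have hset : {z | posSign z * d < 0} = Set.Iic 0 :=
      Set.ext (posSign_mul_neg_iff_of_pos hpos)
    rw [signErrorProb, hset, abs_of_pos hpos]
    exact gaussianReal_real_Iic_zero_le hpos hσ hv

lemma sq_mul_signErrorProb_le (hσ : 0 < σ) (hv : √v ≤ σ) :
    d ^ 2 * signErrorProb d v ≤ σ ^ 2 / 4 := by
  rcases eq_or_ne d 0 with rfl | hd
  · simpa using by positivity
  calc d ^ 2 * signErrorProb d v
      ≤ d ^ 2 * (gaussianReal 0 1).real (Set.Ici (|d| / σ)) := by
        gcongr; exact signErrorProb_le hd hσ hv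
    _ = σ ^ 2 * ((|d| / σ) ^ 2 * (gaussianReal 0 1).real (Set.Ici (|d| / σ))) := by
        rw [div_pow, sq_abs]; field_simp
    _ ≤ σ ^ 2 * (1 / 4) := by gcongr; exact sq_mul_gaussianReal_real_Ici_le (by positivity)
    _ = σ ^ 2 / 4 := by ring

lemma le_abs_mul_one_sub_two_mul_signErrorProb (hσ : 0 < σ) (hv : √v ≤ σ) {t : ℝ}
    (ht1 : t ≤ 1) :
    2 / 5 * t * |d| - σ * t ^ 2 / 5 ≤ |d| * (1 - 2 * signErrorProb d v) := by
  rcases eq_or_ne d 0 with rfl | hd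
  · simpa using by positivity
  set u := |d| / σ with hu
  have hd_eq : |d| = σ * u := by rw [hu]; field_simp
  have hu0 : 0 < u := by positivity
  -- Replacing `u * min u 1` by an affine minorant makes the drift affine in `|d|`, so that only
  -- `∑ |d|` matters after summing over the items.
  have hmin : t * u - t ^ 2 / 2 ≤ u * min u 1 := by
    rcases le_total u 1 with h | h
    · rw [min_eq_left h]; nlinarith [sq_nonneg (u - t)]
    · rw [min_eq_right h]; nlinarith
  calc 2 / 5 * t * |d| - σ * t ^ 2 / 5 = 2 / 5 * σ * (t * u - t ^ 2 / 2) := by rw [hd_eq]; ring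
    _ ≤ 2 / 5 * σ * (u * min u 1) := by gcongr
    _ = |d| * (2 / 5 * min u 1) := by rw [hd_eq]; ring
    _ ≤ |d| * (1 - 2 * (gaussianReal 0 1).real (Set.Ici u)) := by
        gcongr; exact two_fifths_mul_min_le_one_sub_two_mul_gaussianReal_real_Ici hu0
    _ ≤ |d| * (1 - 2 * signErrorProb d v) := by gcongr; exact signErrorProb_le hd hσ hv

end SignError

section Concentration

lemma exp_sub_one_le {x : ℝ} (hx0 : 0 ≤ x) (hx1 : x ≤ 1) : exp x - 1 ≤ x + 3 / 4 * x ^ 2 := by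
  have h := exp_bound' hx0 hx1 (n := 2) (by norm_num)
  simp only [Finset.sum_range_succ, Finset.sum_range_zero] at h
  norm_num at h
  linarith

lemma exp_neg_add_mul_le {a p : ℝ} (ha0 : 0 ≤ a) (ha1 : a ≤ 1 / 2) (hp : 0 ≤ p) :
    exp (-a) + (exp a - exp (-a)) * p ≤ exp (-a * (1 - 2 * p) + 3 * a ^ 2 * p) := by
  have hquad : exp (2 * a) - 1 ≤ 2 * a + 3 * a ^ 2 :=
    (exp_sub_one_le (by linarith) (by linarith)).trans_eq (by ring)
  have hfactor : exp a = exp (-a) * exp (2 * a) := by rw [← exp_add]; ring_nf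
  calc exp (-a) + (exp a - exp (-a)) * p
      = exp (-a) * ((exp (2 * a) - 1) * p + 1) := by rw [hfactor]; ring
    _ ≤ exp (-a) * exp ((2 * a + 3 * a ^ 2) * p) := by
        gcongr
        exact le_trans (by gcongr) (add_one_le_exp _)
    _ = exp (-a * (1 - 2 * p) + 3 * a ^ 2 * p) := by rw [← exp_add]; ring_nf

lemma exp_mul_neg_posSign_mul (θ d z : ℝ) :
    exp (θ * -(posSign z * d)) = exp (-(θ * |d|)) +
      {z | posSign z * d < 0}.indicator (fun _ => exp (θ * |d|) - exp (-(θ * |d|))) z := by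
  by_cases hz : posSign z * d < 0
  · rw [Set.indicator_of_mem (by exact hz), ← abs_of_neg hz, abs_posSign_mul]; ring
  · rw [Set.indicator_of_notMem (by exact hz), ← abs_posSign_mul z d, abs_of_nonneg (not_lt.1 hz),
      mul_neg, add_zero]

variable {Ω : Type*} [MeasurableSpace Ω] {P : Measure Ω}

lemma mgf_neg_posSign_mul {D : Ω → ℝ} {d : ℝ} {v : ℝ≥0} (hD : HasLaw D (gaussianReal d v) P)
    (θ : ℝ) :
    mgf (fun ω => -(posSign (D ω) * d)) P θ =
      exp (-(θ * |d|)) + (exp (θ * |d|) - exp (-(θ * |d|))) * signErrorProb d v := by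
  have hmeas : MeasurableSet {z | posSign z * d < 0} :=
    measurableSet_lt (by fun_prop) measurable_const
  calc mgf (fun ω => -(posSign (D ω) * d)) P θ
      = ∫ z, exp (θ * -(posSign z * d)) ∂gaussianReal d v :=
        hD.integral_comp (f := fun z => exp (θ * -(posSign z * d))) (by fun_prop)
    _ = _ := by
      simp only [exp_mul_neg_posSign_mul]
      rw [integral_add (integrable_const _) ((integrable_const _).indicator hmeas),
        integral_indicator_const _ hmeas]
      simp [signErrorProb, mul_comm]

lemma mgf_neg_posSign_mul_le {D : Ω → ℝ} {d σ θ t : ℝ} {v : ℝ≥0}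
    (hD : HasLaw D (gaussianReal d v) P) (hσ : 0 < σ) (hv : √v ≤ σ)
    (hθ : 0 ≤ θ) (hθd : θ * |d| ≤ 1 / 2) (ht1 : t ≤ 1) :
    mgf (fun ω => -(posSign (D ω) * d)) P θ ≤
      exp (-θ * (2 / 5 * t * |d| - σ * t ^ 2 / 5) + 3 / 4 * θ ^ 2 * σ ^ 2) := by
  have hdrift := le_abs_mul_one_sub_two_mul_signErrorProb (d := d) hσ hv ht1
  have hvar := sq_mul_signErrorProb_le (d := d) hσ hv
  rw [mgf_neg_posSign_mul hD]
  refine (exp_neg_add_mul_le (by positivity) hθd (signErrorProb_nonneg d v)).trans ?_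
  refine exp_le_exp.2 ?_
  calc -(θ * |d|) * (1 - 2 * signErrorProb d v) + 3 * (θ * |d|) ^ 2 * signErrorProb d v
      = -θ * (|d| * (1 - 2 * signErrorProb d v)) + 3 * θ ^ 2 * (d ^ 2 * signErrorProb d v) := by
        rw [mul_pow, sq_abs]; ring
    _ ≤ -θ * (2 / 5 * t * |d| - σ * t ^ 2 / 5) + 3 * θ ^ 2 * (σ ^ 2 / 4) :=
        add_le_add (mul_le_mul_of_nonpos_left hdrift (neg_nonpos.2 hθ)) (by gcongr)
    _ = _ := by ring

lemma integrable_exp_mul_neg_posSign_mul [IsProbabilityMeasure P] {D : Ω → ℝ} (hD : Measurable D)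
    (d : ℝ) {θ : ℝ} : Integrable (fun ω => exp (θ * -(posSign (D ω) * d))) P := by
  refine integrable_exp_mul_of_mem_Icc (a := -|d|) (b := |d|) (by fun_prop)
    (ae_of_all _ fun ω => ?_)
  rw [Set.mem_Icc, ← abs_le, abs_neg, abs_posSign_mul]

variable {ι : Type*} [Fintype ι] {D : ι → Ω → ℝ} {d : ι → ℝ} {v : ι → ℝ≥0} {σ : ℝ}

lemma measureReal_sum_neg_posSign_mul_ge_le (hindep : iIndepFun D P)
    (hmeas : ∀ i, Measurable (D i)) (hD : ∀ i, HasLaw (D i) (gaussianReal (d i) (v i)) P)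
    (hσ : 0 < σ) (hv : ∀ i, √(v i) ≤ σ) {θ t : ℝ} (hθ : 0 ≤ θ) (hθd : ∀ i, θ * |d i| ≤ 1 / 2)
    (ht1 : t ≤ 1) (η : ℝ) :
    P.real {ω | -(2 / 5 * t * ∑ i, |d i|) + Fintype.card ι * σ * t ^ 2 / 5 + η ≤
        ∑ i, -(posSign (D i ω) * d i)} ≤
      exp (-θ * η + 3 / 4 * Fintype.card ι * θ ^ 2 * σ ^ 2) := by
  have := hindep.isProbabilityMeasure
  refine (measureReal_sum_ge_le_exp_of_iIndepFun
    (hindep.comp (fun i z => -(posSign z * d i)) fun i => by fun_prop) (fun i => by fun_prop) hθ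
    (fun i => integrable_exp_mul_neg_posSign_mul (hmeas i) (d i))
    (fun i => mgf_neg_posSign_mul_le (hD i) hσ (hv i) hθ (hθd i) ht1) _).trans_eq ?_
  rw [Finset.sum_add_distrib, ← Finset.mul_sum, Finset.sum_sub_distrib, ← Finset.mul_sum]
  simp only [Finset.sum_const, Finset.card_univ, nsmul_eq_mul]
  ring_nf

lemma measureReal_sum_neg_posSign_mul_ge_le_exp_sq [Nonempty ι] (hindep : iIndepFun D P)
    (hmeas : ∀ i, Measurable (D i)) (hD : ∀ i, HasLaw (D i) (gaussianReal (d i) (v i)) P)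
    (hσ : 0 < σ) (hv : ∀ i, √(v i) ≤ σ) {S L : ℝ} (hS0 : 0 ≤ S) (hS : S ≤ ∑ i, |d i|)
    (hSσ : S ≤ Fintype.card ι * σ) (hL : 0 ≤ L) (hLd : ∀ i, L * |d i| ≤ √(Fintype.card ι) * σ) :
    P.real {ω | -(S ^ 2 / (5 * (Fintype.card ι * σ))) + √(Fintype.card ι) * σ * L ≤
        ∑ i, -(posSign (D i ω) * d i)} ≤ exp (-(5 / 16) * L ^ 2) := by
  have := hindep.isProbabilityMeasure
  set n : ℝ := (Fintype.card ι : ℝ) with hn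
  have hn0 : 0 < n := by rw [hn]; exact_mod_cast Fintype.card_pos
  have hsqrt : √n ^ 2 = n := sq_sqrt hn0.le
  set θ := L / (2 * (√n * σ)) with hθ
  set t := S / (n * σ) with ht
  have hθd (i : ι) : θ * |d i| ≤ 1 / 2 := by
    rw [hθ, div_mul_eq_mul_div, div_le_iff₀ (by positivity)]
    linarith [hLd i]
  have hdrift : -(2 / 5 * t * ∑ i, |d i|) + n * σ * t ^ 2 / 5 ≤ -(S ^ 2 / (5 * (n * σ))) :=
    calc -(2 / 5 * t * ∑ i, |d i|) + n * σ * t ^ 2 / 5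
        ≤ -(2 / 5 * t * S) + n * σ * t ^ 2 / 5 := by gcongr
      _ = -(S ^ 2 / (5 * (n * σ))) := by rw [ht]; field_simp; ring
  have hexponent : -θ * (√n * σ * L) + 3 / 4 * n * θ ^ 2 * σ ^ 2 = -(5 / 16) * L ^ 2 := by
    have hθL : √n * σ * θ = L / 2 := by rw [hθ]; field_simp
    linear_combination (-L + 3 / 4 * (√n * σ * θ + L / 2)) * hθL - 3 / 4 * θ ^ 2 * σ ^ 2 * hsqrt
  rw [← hexponent]
  refine le_trans (measureReal_mono fun ω hω => ?_) (measureReal_sum_neg_posSign_mul_ge_le hindep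
    hmeas hD hσ hv (by positivity) hθd ((div_le_one₀ (by positivity)).2 hSσ) (√n * σ * L))
  exact (add_le_add_left hdrift _).trans hω

end Concentration

lemma hasLaw_mul_sub_gaussianReal {Ω : Type*} [MeasurableSpace Ω] {P : Measure Ω} {X Y : Ω → ℝ}
    {μ₁ μ₂ : ℝ} {v₁ v₂ : ℝ≥0} (hXY : IndepFun X Y P) (hX : HasLaw X (gaussianReal μ₁ v₁) P)
    (hY : HasLaw Y (gaussianReal μ₂ v₂) P) (c : ℝ) :
    HasLaw (fun ω => c * X ω - Y ω)
      (gaussianReal (c * μ₁ - μ₂) (.mk (c ^ 2) (sq_nonneg c) * v₁ + v₂)) P := by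
  have hcX := gaussianReal_const_mul hX c
  have hnegY := gaussianReal_neg hY
  have hindep : IndepFun (fun ω => c * X ω) (-Y) P :=
    hXY.comp (measurable_const_mul c) measurable_neg
  simp only [sub_eq_add_neg]
  exact ⟨hcX.aemeasurable.add hnegY.aemeasurable,
    gaussianReal_add_gaussianReal_of_indepFun hindep hcX.map_eq hnegY.map_eq⟩

section WeakDuality

variable {m : ℕ} {μa μb : Fin m → ℝ} {c : ℝ}

lemma neg_mul_envy_le_sum_abs (hc : 0 ≤ c) (A : Finset (Fin m)) :
    -((1 + c) * envy μa μb A) ≤ ∑ i, |c * μa i - μb i| :=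
  calc -((1 + c) * envy μa μb A)
      = -(c * envy μa μb A + envy μa μb A) := by ring
    _ ≤ -(c * envyAB μa A + envyBA μb A) := by
      unfold envy
      gcongr
      exacts [le_max_left _ _, le_max_right _ _]
    _ = ∑ i ∈ A, (c * μa i - μb i) + ∑ i ∈ Aᶜ, -(c * μa i - μb i) := by
      simp only [envyAB, envyBA, neg_sub, Finset.sum_sub_distrib, ← Finset.mul_sum]
      ring
    _ ≤ ∑ i ∈ A, |c * μa i - μb i| + ∑ i ∈ Aᶜ, |c * μa i - μb i| := by
      gcongr
      exacts [le_abs_self _, neg_le_abs _]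
    _ = ∑ i, |c * μa i - μb i| := Finset.sum_add_sum_compl A _

lemma neg_mul_optEnvy_le_sum_abs (hc : 0 ≤ c) :
    -((1 + c) * optEnvy μa μb) ≤ ∑ i, |c * μa i - μb i| := by
  obtain ⟨A, hA⟩ := exists_eq_ciInf_of_finite (f := envy μa μb)
  rw [optEnvy, ← hA]
  exact neg_mul_envy_le_sum_abs hc A

end WeakDuality

section Thresholding

variable {m q : ℕ} {μa μb : Fin m → ℝ} {c : ℝ}

/-- The margin `c v^a_i − v^b_i`, whose sign decides which agent receives item `i`. -/
def margin (c : ℝ) (i : Fin m) (ω : Fin m × Bool → ℝ) : ℝ := c * ω (i, true) - ω (i, false)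

instance isProbabilityMeasure_threshMeasure :
    IsProbabilityMeasure (threshMeasure m q μa μb) := by
  unfold threshMeasure; infer_instance

lemma measurable_margin (c : ℝ) (i : Fin m) : Measurable (margin c i) := by
  unfold margin; fun_prop

lemma iIndepFun_margin (q : ℕ) (μa μb : Fin m → ℝ) (c : ℝ) :
    iIndepFun (margin c) (threshMeasure m q μa μb) :=
  (iIndepFun_pi_section fun i j => gaussianReal (if j then μa i else μb i) (m / q)).comp
    (fun _ x => c * x true - x false) fun _ => by fun_prop

lemma hasLaw_margin (q : ℕ) (μa μb : Fin m → ℝ) (c : ℝ) (i : Fin m) :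
    HasLaw (margin c i)
      (gaussianReal (c * μa i - μb i) (.mk (c ^ 2) (sq_nonneg c) * (m / q) + m / q))
      (threshMeasure m q μa μb) := by
  let ν (p : Fin m × Bool) : Measure ℝ :=
    gaussianReal (if p.2 then μa p.1 else μb p.1) (m / q)
  have hcoord (j : Bool) : HasLaw (fun ω : Fin m × Bool → ℝ => ω (i, j)) (ν (i, j))
      (threshMeasure m q μa μb) := (measurePreserving_eval ν (i, j)).hasLaw
  have hcoords : iIndepFun (fun p (ω : Fin m × Bool → ℝ) => ω p) (threshMeasure m q μa μb) :=
    iIndepFun_pi (μ := ν) (X := fun _ x => x) fun _ => aemeasurable_id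
  exact hasLaw_mul_sub_gaussianReal (hcoords.indepFun (by simp)) (hcoord true) (hcoord false) c

lemma one_add_mul_fFun (hc : 1 + c ≠ 0) (ω : Fin m × Bool → ℝ) :
    (1 + c) * fFun μa μb c ω = ∑ i, -(posSign (margin c i ω) * (c * μa i - μb i)) := by
  have hsign (i : Fin m) : xSign c ω i = posSign (margin c i ω) := rfl
  simp only [fFun, eA, eB, mul_div_cancel₀ _ hc, hsign, mul_neg, Finset.mul_sum,
    ← Finset.sum_neg_distrib, ← Finset.sum_add_distrib]
  exact Finset.sum_congr rfl fun i _ => by ring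

lemma abs_mul_sub_le_one_add {x y : ℝ} (hc : 0 ≤ c) (hx : |x| ≤ 1) (hy : |y| ≤ 1) :
    |c * x - y| ≤ 1 + c :=
  calc |c * x - y| ≤ |c * x| + |y| := abs_sub _ _
    _ = c * |x| + |y| := by rw [abs_mul, abs_of_nonneg hc]
    _ ≤ 1 + c := by linarith [mul_le_of_le_one_right hc hx]

lemma sqrt_variance_margin_le (hc : 0 ≤ c) (v : ℝ≥0) :
    √((.mk (c ^ 2) (sq_nonneg c) * v + v : ℝ≥0) : ℝ) ≤ (1 + c) * √v := by
  refine sqrt_le_iff.2 ⟨by positivity, ?_⟩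
  rw [mul_pow, sq_sqrt v.coe_nonneg, NNReal.coe_add, NNReal.coe_mul, NNReal.coe_mk]
  nlinarith [mul_nonneg hc v.coe_nonneg]

lemma measureReal_fFun_ge_le_exp_sq (hm : 0 < m) (hq : 0 < q)
    (hμa : ∀ i, |μa i| ≤ 1) (hμb : ∀ i, |μb i| ≤ 1) (hc : 0 ≤ c)
    {Δ L : ℝ} (hΔ : 0 ≤ Δ) (hopt : optEnvy μa μb ≤ -Δ) (hΔm : Δ ≤ m * √(m / q))
    (hL : 0 ≤ L) (hLm : L ≤ √m * √(m / q)) :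
    (threshMeasure m q μa μb).real {ω | -(Δ ^ 2 / (5 * (m * √(m / q)))) + √m * √(m / q) * L ≤
        fFun μa μb c ω} ≤ exp (-(5 / 16) * L ^ 2) := by
  have : Nonempty (Fin m) := ⟨⟨0, hm⟩⟩
  have hc1 : 0 < 1 + c := by linarith
  set w := √(m / q : ℝ) with hw
  have hw0 : 0 < w := by positivity
  have hduality : (1 + c) * Δ ≤ ∑ i, |c * μa i - μb i| :=
    le_trans (by nlinarith) (neg_mul_optEnvy_le_sum_abs hc)
  have hbound := measureReal_sum_neg_posSign_mul_ge_le_exp_sq (iIndepFun_margin q μa μb c)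
    (measurable_margin c) (hasLaw_margin q μa μb c) (σ := (1 + c) * w) (by positivity)
    (fun _ => by simpa [hw] using sqrt_variance_margin_le hc (m / q)) (by positivity) hduality
    (by rw [Fintype.card_fin]; nlinarith) hL
    (fun i => (mul_le_mul hLm (abs_mul_sub_le_one_add hc (hμa i) (hμb i)) (abs_nonneg _)
      (by positivity)).trans_eq (by rw [Fintype.card_fin]; ring))
  refine le_trans (measureReal_mono fun ω hω => ?_) hbound
  calc _ = (1 + c) * (-(Δ ^ 2 / (5 * (m * w))) + √m * w * L) := by
        rw [Fintype.card_fin]; field_simp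
    _ ≤ (1 + c) * fFun μa μb c ω := by gcongr; exact hω
    _ = _ := one_add_mul_fFun hc1.ne' ω

end Thresholding

section Scaling

variable {x y : ℝ}

lemma sqrt_mul_sqrt_div (hx : 0 ≤ x) (y : ℝ) : √x * √(x / y) = x / √y := by
  rw [sqrt_div hx, mul_div_assoc', mul_self_sqrt hx]

lemma inv_mul_sqrt_div (hx : 0 ≤ x) (y : ℝ) :
    (x * √(x / y))⁻¹ = x ^ (-(3 : ℝ) / 2) * y ^ ((1 : ℝ) / 2) := by
  have hpow : x * √x = x ^ ((3 : ℝ) / 2) := by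
    rw [sqrt_eq_rpow, ← rpow_one_add' hx (by norm_num)]; norm_num
  rw [sqrt_div hx, mul_div_assoc', inv_div, hpow, neg_div, rpow_neg hx, sqrt_eq_rpow,
    div_eq_mul_inv, mul_comm]

lemma le_mul_sqrt_div_of_mul_sq_le {a : ℝ} (hx : 0 ≤ x) (hy : 0 < y) (h : y * a ^ 2 ≤ x ^ 3) :
    a ≤ x * √(x / y) := by
  refine le_of_sq_le_sq ?_ (by positivity)
  rw [mul_pow, sq_sqrt (by positivity), mul_div_assoc', le_div_iff₀ hy]
  linarith

lemma le_div_sqrt_of_le_sq_div_sq {a : ℝ} (hx : 0 ≤ x) (hy : 0 < y) (h : y ≤ x ^ 2 / a ^ 2) :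
    a ≤ x / √y := by
  have ha : a ≠ 0 := by rintro rfl; norm_num at h; linarith
  refine le_of_sq_le_sq ?_ (by positivity)
  rwa [div_pow, sq_sqrt hy.le, le_div_comm₀ (by positivity) hy]

end Scaling

theorem stmt10_general {m : ℕ} (μa μb : Fin m → ℝ)
    (hμa : ∀ i, |μa i| ≤ 1) (hμb : ∀ i, |μb i| ≤ 1)
    (Δ : ℝ) (hΔ : 0 < Δ) (hopt : optEnvy μa μb ≤ -Δ)
    (q : ℕ) (hq1 : 1 ≤ q) (hq2 : (q : ℝ) ≤ m ^ 3 / Δ ^ 2)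
    (hq3 : (q : ℝ) ≤ m ^ 2 / Real.log m ^ 2)
    (c : ℝ) (hc : 0 ≤ c) :
    threshMeasure m q μa μb
        {ω | -(1 / 5) * (m : ℝ) ^ (-(3 : ℝ) / 2) * (q : ℝ) ^ ((1 : ℝ) / 2) * Δ ^ 2 +
            (m / Real.sqrt q) * Real.log m < fFun μa μb c ω} ≤
      ENNReal.ofReal (Real.exp (-(5 / 16) * Real.log m ^ 2)) := by
  have hq : (0 : ℝ) < q := Nat.cast_pos.2 hq1
  have hm : 0 < m := by
    rw [Nat.pos_iff_ne_zero]
    rintro rfl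
    norm_num at hq2
    omega
  have hΔm : Δ ≤ m * √(m / q) := le_mul_sqrt_div_of_mul_sq_le m.cast_nonneg hq
    ((le_div_iff₀ (by positivity)).1 hq2)
  have hLm : log m ≤ √m * √(m / q) :=
    (le_div_sqrt_of_le_sq_div_sq m.cast_nonneg hq hq3).trans_eq
      (sqrt_mul_sqrt_div m.cast_nonneg _).symm
  have hthreshold : -(1 / 5) * (m : ℝ) ^ (-(3 : ℝ) / 2) * (q : ℝ) ^ ((1 : ℝ) / 2) * Δ ^ 2 =
      -(Δ ^ 2 / (5 * (m * √(m / q)))) := by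
    rw [mul_assoc (-(1 / 5)), ← inv_mul_sqrt_div m.cast_nonneg]
    field_simp
  rw [hthreshold, ← sqrt_mul_sqrt_div m.cast_nonneg, ← ofReal_measureReal]
  refine ENNReal.ofReal_le_ofReal
    (le_trans (measureReal_mono fun ω (hω : _ < fFun μa μb c ω) => hω.le) ?_)
  exact measureReal_fFun_ge_le_exp_sq hm hq1 hμa hμb hc hΔ.le hopt hΔm (log_natCast_nonneg m) hLm

/-- in the thresholding allocation model, if `OptEnvy ≤ -Δ`,
`q ≤ (1/2) m³/Δ²` and `q ≤ m²/(log m)²`, then for every fixed `c > 0`,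
`P[f(c) > −(1/5) m^{−3/2} q^{1/2} Δ² + (m/√q) log m] ≤ 2 exp(−(3/10)(log m)²)`. -/
theorem stmt10 {m : ℕ} (μa μb : Fin m → ℝ)
    (hμa : ∀ i, μa i ∈ Set.Icc (0 : ℝ) 1) (hμb : ∀ i, μb i ∈ Set.Icc (0 : ℝ) 1)
    (Δ : ℝ) (hΔ : 0 < Δ) (hopt : optEnvy μa μb ≤ -Δ)
    (q : ℕ) (hq1 : 1 ≤ q) (hq2 : (q : ℝ) ≤ 1 / 2 * m ^ 3 / Δ ^ 2)
    (hq3 : (q : ℝ) ≤ m ^ 2 / Real.log m ^ 2)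
    (c : ℝ) (hc : 0 < c) :
    threshMeasure m q μa μb
        {ω | -(1 / 5) * (m : ℝ) ^ (-(3 : ℝ) / 2) * (q : ℝ) ^ ((1 : ℝ) / 2) * Δ ^ 2 +
            (m / Real.sqrt q) * Real.log m < fFun μa μb c ω} ≤
      ENNReal.ofReal (2 * Real.exp (-(3 / 10) * Real.log m ^ 2)) := by
  have habs {x : ℝ} (hx : x ∈ Set.Icc (0 : ℝ) 1) : |x| ≤ 1 := (abs_of_nonneg hx.1).trans_le hx.2
  have hq2' : (q : ℝ) ≤ m ^ 3 / Δ ^ 2 :=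
    hq2.trans (by gcongr; linarith [pow_nonneg (m.cast_nonneg (α := ℝ)) 3])
  have htail : exp (-(5 / 16) * log m ^ 2) ≤ 2 * exp (-(3 / 10) * log m ^ 2) :=
    (exp_le_exp.2 (by nlinarith)).trans (le_mul_of_one_le_left (exp_nonneg _) one_le_two)
  exact (stmt10_general μa μb (fun i => habs (hμa i)) (fun i => habs (hμb i)) Δ hΔ hopt q hq1 hq2'
    hq3 c hc.le).trans (ENNReal.ofReal_le_ofReal htail)
end
end

section
/- Fix reals μ^a, μ^b, a variance s² > 0, and c > 0. Let v^a ~ N(μ^a, s²) and v^b ~ N(μ^b, s²) be independent, and let x = 1 if c v^a − v^b > 0 and x = −1 otherwise. Then (i) the random variables c v^a − v^b and v^a − μ^a + c(v^b − μ^b) are independent, and (ii) the random variable x · (v^a − μ^a + c(v^b − μ^b)) has the Gaussian distribution N(0, (1+c²) s²). -/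
open MeasureTheory ProbabilityTheory Real
open scoped ENNReal NNReal

noncomputable section

/-!
The two linear forms `c v^a − v^b` and `v^a + c v^b` have orthogonal coefficient vectors, so for
independent `v^a` and `v^b` of equal variance they are uncorrelated; being jointly Gaussian, they
are independent. The centred second form has a law that is invariant under negation, so multiplying
it by a sign depending only on the first form leaves its law unchanged: it does so conditionally on
every value of the first form.
-/

section Randomization

variable {Ω 𝓧 𝓨 𝓩 : Type*} {mΩ : MeasurableSpace Ω} {m𝓧 : MeasurableSpace 𝓧}
  {m𝓨 : MeasurableSpace 𝓨} {m𝓩 : MeasurableSpace 𝓩} {P : Measure Ω} [IsProbabilityMeasure P]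
  {X : Ω → 𝓧} {Y : Ω → 𝓨}

theorem hasLaw_uncurry_of_indepFun {ν : Measure 𝓨} {ρ : Measure 𝓩} {g : 𝓧 → 𝓨 → 𝓩}
    (hX : AEMeasurable X P) (hY : HasLaw Y ν P) (hXY : IndepFun X Y P)
    (hg : Measurable (Function.uncurry g)) (hgν : ∀ᵐ x ∂P.map X, ν.map (g x) = ρ) :
    HasLaw (fun ω ↦ g (X ω) (Y ω)) ρ P := by
  have : IsProbabilityMeasure (P.map X) := Measure.isProbabilityMeasure_map hX
  have : IsProbabilityMeasure ν := hY.isProbabilityMeasure_iff.1 ‹_›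
  obtain ⟨x, rfl⟩ := hgν.exists
  have hlaw : HasLaw (fun ω ↦ (X ω, Y ω)) ((P.map X).prod ν) P :=
    IndepFun.hasLaw_prod ⟨hX, rfl⟩ hY hXY
  have hskew : MeasurePreserving (fun p : 𝓧 × 𝓨 ↦ (p.1, g p.1 p.2))
      ((P.map X).prod ν) ((P.map X).prod (ν.map (g x))) :=
    (MeasurePreserving.id _).skew_product hg hgν
  exact (measurePreserving_snd.comp hskew).fun_comp_hasLaw hlaw

theorem hasLaw_ite_neg_of_indepFun [Neg 𝓨] [MeasurableNeg 𝓨] {ν : Measure 𝓨} [ν.IsNegInvariant]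
    {p : 𝓧 → Prop} [DecidablePred p]
    (hX : AEMeasurable X P) (hY : HasLaw Y ν P) (hXY : IndepFun X Y P)
    (hp : MeasurableSet {x | p x}) :
    HasLaw (fun ω ↦ if p (X ω) then Y ω else -Y ω) ν P := by
  refine hasLaw_uncurry_of_indepFun (g := fun x y ↦ if p x then y else -y) hX hY hXY
    (.ite (measurable_fst hp) measurable_snd measurable_snd.neg) (.of_forall fun x ↦ ?_)
  by_cases hx : p x
  · simp only [hx, if_true, Measure.map_id']
  · simpa only [hx, if_false] using ν.map_neg_eq_self

end Randomization

instance isNegInvariant_gaussianReal_zero (v : ℝ≥0) : (gaussianReal 0 v).IsNegInvariant where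
  neg_eq_self := gaussianReal_map_neg.trans (by rw [neg_zero])

section LinearCombination

variable {Ω : Type*} {mΩ : MeasurableSpace Ω} {P : Measure Ω} {X Y : Ω → ℝ}

theorem covariance_linearCombination [IsFiniteMeasure P] (hX : MemLp X 2 P) (hY : MemLp Y 2 P)
    (a b a' b' : ℝ) :
    cov[fun ω ↦ a * X ω + b * Y ω, fun ω ↦ a' * X ω + b' * Y ω; P] =
      a * a' * Var[X; P] + (a * b' + b * a') * cov[X, Y; P] + b * b' * Var[Y; P] := by
  have haX := hX.const_mul a
  have hbY := hY.const_mul b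
  have haX' := hX.const_mul a'
  have hbY' := hY.const_mul b'
  calc cov[(fun ω ↦ a * X ω) + fun ω ↦ b * Y ω, (fun ω ↦ a' * X ω) + fun ω ↦ b' * Y ω; P]
    _ = a' * (a * cov[X, X; P]) + b' * (a * cov[X, Y; P]) +
        (a' * (b * cov[Y, X; P]) + b' * (b * cov[Y, Y; P])) := by
      rw [covariance_add_left haX hbY (haX'.add hbY'), covariance_add_right haX haX' hbY',
        covariance_add_right hbY haX' hbY']
      simp only [covariance_const_mul_left, covariance_const_mul_right]
    _ = _ := by
      rw [covariance_self hX.aemeasurable, covariance_self hY.aemeasurable, covariance_comm Y X]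
      ring

theorem indepFun_linearCombination_of_hasGaussianLaw
    (hXY : HasGaussianLaw (fun ω ↦ (X ω, Y ω)) P) {a b a' b' : ℝ}
    (h : a * a' * Var[X; P] + (a * b' + b * a') * cov[X, Y; P] + b * b' * Var[Y; P] = 0) :
    IndepFun (fun ω ↦ a * X ω + b * Y ω) (fun ω ↦ a' * X ω + b' * Y ω) P := by
  have := hXY.isProbabilityMeasure
  let fst := ContinuousLinearMap.fst ℝ ℝ ℝ
  let snd := ContinuousLinearMap.snd ℝ ℝ ℝ
  have hpair : HasGaussianLaw (fun ω ↦ (a * X ω + b * Y ω, a' * X ω + b' * Y ω)) P :=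
    hXY.map_fun ((a • fst + b • snd).prod (a' • fst + b' • snd))
  refine hpair.indepFun_of_covariance_eq_zero ?_
  rw [covariance_linearCombination hXY.fst.memLp_two hXY.snd.memLp_two, h]

theorem hasLaw_gaussianReal_linearCombination {μ₁ μ₂ : ℝ} {v₁ v₂ : ℝ≥0}
    (hX : HasLaw X (gaussianReal μ₁ v₁) P) (hY : HasLaw Y (gaussianReal μ₂ v₂) P)
    (hXY : IndepFun X Y P) (a b : ℝ) :
    HasLaw (fun ω ↦ a * X ω + b * Y ω)
      (gaussianReal (a * μ₁ + b * μ₂) ((a ^ 2).toNNReal * v₁ + (b ^ 2).toNNReal * v₂)) P := by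
  have haX := gaussianReal_const_mul hX a
  have hbY := gaussianReal_const_mul hY b
  have hind : IndepFun (fun ω ↦ a * X ω) (fun ω ↦ b * Y ω) P :=
    hXY.comp (measurable_const_mul a) (measurable_const_mul b)
  rw [Real.toNNReal_of_nonneg (sq_nonneg a), Real.toNNReal_of_nonneg (sq_nonneg b)]
  exact ⟨haX.aemeasurable.add hbY.aemeasurable,
    gaussianReal_add_gaussianReal_of_indepFun hind haX.map_eq hbY.map_eq⟩

end LinearCombination

section EqualVariance

variable {Ω : Type*} {mΩ : MeasurableSpace Ω} {P : Measure Ω} {X Y : Ω → ℝ} {μ₁ μ₂ : ℝ} {v : ℝ≥0}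

theorem indepFun_orthogonal_linearCombination (hX : HasLaw X (gaussianReal μ₁ v) P)
    (hY : HasLaw Y (gaussianReal μ₂ v) P) (hXY : IndepFun X Y P) {a b a' b' : ℝ}
    (h : a * a' + b * b' = 0) :
    IndepFun (fun ω ↦ a * X ω + b * Y ω) (fun ω ↦ a' * X ω + b' * Y ω) P := by
  have hGX := hX.hasGaussianLaw
  have hGY := hY.hasGaussianLaw
  refine indepFun_linearCombination_of_hasGaussianLaw (hXY.hasGaussianLaw hGX hGY) ?_
  rw [hXY.covariance_eq_zero hGX.memLp_two hGY.memLp_two, hX.variance_eq, hY.variance_eq,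
    variance_id_gaussianReal, variance_id_gaussianReal]
  linear_combination (v : ℝ) * h

theorem hasLaw_sub_add_const_mul_sub (hX : HasLaw X (gaussianReal μ₁ v) P)
    (hY : HasLaw Y (gaussianReal μ₂ v) P) (hXY : IndepFun X Y P) (c : ℝ) :
    HasLaw (fun ω ↦ X ω - μ₁ + c * (Y ω - μ₂)) (gaussianReal 0 ((1 + c ^ 2).toNNReal * v)) P := by
  have hcentred : IndepFun (fun ω ↦ X ω - μ₁) (fun ω ↦ Y ω - μ₂) P :=
    hXY.comp (measurable_id.sub_const μ₁) (measurable_id.sub_const μ₂)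
  have h := hasLaw_gaussianReal_linearCombination (gaussianReal_sub_const hX μ₁)
    (gaussianReal_sub_const hY μ₂) hcentred 1 c
  rw [Real.toNNReal_add zero_le_one (sq_nonneg c), add_mul]
  simpa only [sub_self, mul_zero, add_zero, one_mul, one_pow] using h

theorem indepFun_const_mul_sub_sub_add_const_mul_sub (hX : HasLaw X (gaussianReal μ₁ v) P)
    (hY : HasLaw Y (gaussianReal μ₂ v) P) (hXY : IndepFun X Y P) (c : ℝ) :
    IndepFun (fun ω ↦ c * X ω - Y ω) (fun ω ↦ X ω - μ₁ + c * (Y ω - μ₂)) P := by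
  have h : IndepFun (fun ω ↦ c * X ω + -1 * Y ω) (fun ω ↦ 1 * X ω + c * Y ω) P :=
    indepFun_orthogonal_linearCombination hX hY hXY (by ring)
  convert h.comp measurable_id (measurable_id.sub_const (μ₁ + c * μ₂)) using 2 with ω ω <;>
    simp only [Function.comp_apply, id_eq] <;> ring

theorem stmt12_general (hX : HasLaw X (gaussianReal μ₁ v) P) (hY : HasLaw Y (gaussianReal μ₂ v) P)
    (hXY : IndepFun X Y P) (c : ℝ) :
    IndepFun (fun ω ↦ c * X ω - Y ω) (fun ω ↦ X ω - μ₁ + c * (Y ω - μ₂)) P ∧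
      HasLaw (fun ω ↦ (if 0 < c * X ω - Y ω then (1 : ℝ) else -1) * (X ω - μ₁ + c * (Y ω - μ₂)))
        (gaussianReal 0 ((1 + c ^ 2).toNNReal * v)) P := by
  have := hX.isProbabilityMeasure
  have hind := indepFun_const_mul_sub_sub_add_const_mul_sub hX hY hXY c
  have hdiff : AEMeasurable (fun ω ↦ c * X ω - Y ω) P :=
    (hX.aemeasurable.const_mul c).sub hY.aemeasurable
  refine ⟨hind, ?_⟩
  simpa only [ite_mul, one_mul, neg_one_mul] using
    hasLaw_ite_neg_of_indepFun (p := (0 < ·)) hdiff (hasLaw_sub_add_const_mul_sub hX hY hXY c)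
      hind measurableSet_Ioi

end EqualVariance

/-- for independent `v^a ~ N(μ^a, s²)` and `v^b ~ N(μ^b, s²)` and
`x = sign(c v^a − v^b)`, (i) `c v^a − v^b` and `v^a − μ^a + c (v^b − μ^b)` are independent,
and (ii) `x (v^a − μ^a + c (v^b − μ^b)) ~ N(0, (1+c²) s²)`. -/
theorem stmt12 (μa μb s2 c : ℝ) (hs2 : 0 < s2) (hc : 0 < c)
    (P : Measure (ℝ × ℝ))
    (hP : P = (gaussianReal μa s2.toNNReal).prod (gaussianReal μb s2.toNNReal)) :
    IndepFun (fun p : ℝ × ℝ => c * p.1 - p.2)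
        (fun p : ℝ × ℝ => p.1 - μa + c * (p.2 - μb)) P ∧
      Measure.map (fun p : ℝ × ℝ =>
          (if 0 < c * p.1 - p.2 then (1 : ℝ) else -1) * (p.1 - μa + c * (p.2 - μb))) P =
        gaussianReal 0 ((1 + c ^ 2) * s2).toNNReal := by
  subst hP
  obtain ⟨hind, hlaw⟩ := stmt12_general
    (measurePreserving_fst (μ := gaussianReal μa s2.toNNReal)).hasLaw
    (measurePreserving_snd (ν := gaussianReal μb s2.toNNReal)).hasLaw
    (indepFun_prod measurable_id measurable_id) c
  exact ⟨hind, by rw [Real.toNNReal_mul (by positivity)]; exact hlaw.map_eq⟩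
end
end

section
/- Let Δ : ℕ → ℝ be a sequence with Δ(m) ≥ m^{1/4}(log m)² for all sufficiently large m and Δ(m)·(log m)/m → 0 as m → ∞, set q(m) = m·⌈15 (m^{3/2}/Δ(m)²) log m + (log m)²⌉, and for each m let μ^a, μ^b ∈ [0,1]^m be any utility profiles. In the thresholding allocation model with q = q(m) (estimate variance m/q), the probability of the following event tends to 1 as m → ∞: for every pair of consecutive grid points c₁ and c₂ = c₁ + 1/m³ in C = {k/m³ : k = 1, …, m⁶}, the number of items i with x_i(c₁) ≠ x_i(c₂) is at most log m. -/
open MeasureTheory ProbabilityTheory Real Filter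
open scoped ENNReal NNReal Classical

noncomputable section

/-!
An item changes sides between the thresholds `c₁` and `c₂` exactly when its pair of estimates
`(v^a, v^b)` lies in the double wedge between the lines of slopes `c₁` and `c₂`. Conditionally on
`v^a`, this asks the Gaussian `v^b` to hit an interval of length `|c₂ - c₁| |v^a|`, so with
variance `v = m / q` the probability is at most
`|c₂ - c₁| E|v^a| / √(2πv) ≤ |c₂ - c₁| √((μ^a)² + v) / √(2πv)`. When `m⁻² ≤ v ≤ 1` and
`c₂ - c₁ = m⁻³` this is at most `m⁻²`. Distinct items are independent, so a union bound over the at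
most `m⁶` grid steps and at most `m⁷` sets of seven items shows that some step moves seven or more
items with probability at most `m⁶ · m⁷ · m⁻¹⁴ = 1/m`. Finally `Δ ≥ m^{1/4} (log m)²` makes
`q / m = O(m)`, so that `v ≥ m⁻²` eventually.
-/

section GeneralProbability

lemma iIndepFun_curry_pi {ι κ X : Type*} [Fintype ι] [Fintype κ] [MeasurableSpace X]
    (μ : ι × κ → Measure X) [∀ p, IsProbabilityMeasure (μ p)] :
    iIndepFun (fun i (ω : ι × κ → X) j ↦ ω (i, j)) (Measure.pi μ) := by
  rw [← Measure.infinitePi_eq_pi,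
    iIndepFun_iff_map_fun_eq_infinitePi_map fun i ↦ by fun_prop]
  have hcurry := Measure.infinitePi_map_curry fun i j ↦ μ (i, j)
  have hrow (i : ι) : (Measure.infinitePi μ).map (fun ω j ↦ ω (i, j)) =
      Measure.infinitePi fun j ↦ μ (i, j) := by
    rw [← Measure.infinitePi_map_eval (fun i ↦ Measure.infinitePi fun j ↦ μ (i, j)) i, ← hcurry,
      Measure.map_map (measurable_pi_apply i) (MeasurableEquiv.measurable _)]
    rfl
  simp only [hrow]
  exact hcurry

lemma measurePreserving_eval_prodMk_pi {ι : Type*} [Fintype ι] {X : ι → Type*}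
    [∀ i, MeasurableSpace (X i)] (μ : ∀ i, Measure (X i)) [∀ i, IsProbabilityMeasure (μ i)]
    {i j : ι} (hij : i ≠ j) :
    MeasurePreserving (fun ω : ∀ i, X i ↦ (ω i, ω j)) (Measure.pi μ) ((μ i).prod (μ j)) where
  measurable := by fun_prop
  map_eq := by
    have hindep : IndepFun (fun ω : ∀ i, X i ↦ ω i) (fun ω ↦ ω j) (Measure.pi μ) :=
      (iIndepFun_pi (X := fun _ ↦ id) fun _ ↦ aemeasurable_id).indepFun hij
    rw [hindep.map_prod_eq_prod_map_map (measurable_pi_apply i).aemeasurable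
      (measurable_pi_apply j).aemeasurable]
    congr 1
    exacts [(measurePreserving_eval μ i).map_eq, (measurePreserving_eval μ j).map_eq]

lemma measure_le_card_filter_mem_le_of_iIndepSet {Ω ι : Type*} [MeasurableSpace Ω] [Fintype ι]
    {P : Measure Ω} {A : ι → Set Ω} (hA : iIndepSet A P) {p : ℝ≥0∞} (hp : ∀ i, P (A i) ≤ p)
    (r : ℕ) :
    P {ω | r ≤ (Finset.univ.filter fun i ↦ ω ∈ A i).card} ≤
      (Fintype.card ι).choose r * p ^ r := by
  have hcover : {ω | r ≤ (Finset.univ.filter fun i ↦ ω ∈ A i).card} ⊆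
      ⋃ S ∈ Finset.powersetCard r (Finset.univ : Finset ι), ⋂ i ∈ S, A i := by
    intro ω hω
    obtain ⟨S, hS, hcard⟩ := Finset.exists_subset_card_eq hω
    simp only [Set.mem_iUnion, Set.mem_iInter, Finset.mem_powersetCard_univ]
    exact ⟨S, hcard, fun i hi ↦ (Finset.mem_filter.mp (hS hi)).2⟩
  have hS : ∀ S ∈ Finset.powersetCard r (Finset.univ : Finset ι), P (⋂ i ∈ S, A i) ≤ p ^ r := by
    intro S hS
    rw [hA.meas_biInter, ← Finset.mem_powersetCard_univ.mp hS]
    exact Finset.prod_le_pow_card S _ p fun i _ ↦ hp i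
  calc P {ω | r ≤ (Finset.univ.filter fun i ↦ ω ∈ A i).card}
      ≤ ∑ S ∈ Finset.powersetCard r (Finset.univ : Finset ι), P (⋂ i ∈ S, A i) :=
        (measure_mono hcover).trans (measure_biUnion_finset_le _ _)
    _ ≤ ∑ _S ∈ Finset.powersetCard r (Finset.univ : Finset ι), p ^ r := Finset.sum_le_sum hS
    _ = (Fintype.card ι).choose r * p ^ r := by
        rw [Finset.sum_const, Finset.card_powersetCard, Finset.card_univ, nsmul_eq_mul]

lemma tendsto_toReal_measure_of_tendsto_measure_compl {α : Type*} {l : Filter α} {Ω : α → Type*}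
    [∀ n, MeasurableSpace (Ω n)] {P : ∀ n, Measure (Ω n)} [∀ n, IsProbabilityMeasure (P n)]
    {A : ∀ n, Set (Ω n)} (h : Tendsto (fun n ↦ P n (A n)ᶜ) l (nhds 0)) :
    Tendsto (fun n ↦ (P n (A n)).toReal) l (nhds 1) := by
  have hsub : Tendsto (fun n ↦ 1 - P n (A n)ᶜ) l (nhds 1) := by
    simpa using ENNReal.Tendsto.sub (tendsto_const_nhds (x := 1)) h (.inl ENNReal.one_ne_top)
  have hlower (n : α) : 1 - P n (A n)ᶜ ≤ P n (A n) := by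
    rw [tsub_le_iff_right, ← measure_univ (μ := P n)]
    exact measure_univ_le_add_compl (A n)
  exact (ENNReal.tendsto_toReal ENNReal.one_ne_top).comp <|
    tendsto_of_tendsto_of_tendsto_of_le_of_le hsub tendsto_const_nhds hlower fun n ↦ prob_le_one

end GeneralProbability

section Gaussian

lemma gaussianPDFReal_le (μ : ℝ) (v : ℝ≥0) (x : ℝ) :
    gaussianPDFReal μ v x ≤ (√(2 * π * v))⁻¹ := by
  have hexp : rexp (-(x - μ) ^ 2 / (2 * v)) ≤ 1 := by
    rw [Real.exp_le_one_iff, neg_div, neg_nonpos]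
    positivity
  exact mul_le_of_le_one_right (by positivity) hexp

lemma gaussianReal_le_mul_volume (μ : ℝ) {v : ℝ≥0} (hv : v ≠ 0) (s : Set ℝ) :
    gaussianReal μ v s ≤ ENNReal.ofReal (√(2 * π * v))⁻¹ * volume s := by
  rw [gaussianReal_apply μ hv, ← setLIntegral_const]
  exact lintegral_mono fun x ↦ ENNReal.ofReal_le_ofReal (gaussianPDFReal_le μ v x)

lemma integral_sq_gaussianReal (μ : ℝ) (v : ℝ≥0) :
    ∫ x, x ^ 2 ∂gaussianReal μ v = μ ^ 2 + v := by
  have hvar := variance_eq_sub (memLp_id_gaussianReal (μ := μ) (v := v) 2)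
  simp only [variance_id_gaussianReal, Pi.pow_apply, id_eq, integral_id_gaussianReal] at hvar
  linarith

lemma lintegral_enorm_gaussianReal_le (μ : ℝ) (v : ℝ≥0) :
    ∫⁻ x, ‖x‖ₑ ∂gaussianReal μ v ≤ ENNReal.ofReal √(μ ^ 2 + v) := by
  have hL2 : eLpNorm id 2 (gaussianReal μ v) = ENNReal.ofReal √(μ ^ 2 + v) := by
    rw [(memLp_id_gaussianReal 2).eLpNorm_eq_integral_rpow_norm two_ne_zero ENNReal.ofNat_ne_top,
      ← integral_sq_gaussianReal, Real.sqrt_eq_rpow]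
    simp
  calc ∫⁻ x, ‖x‖ₑ ∂gaussianReal μ v = eLpNorm id 1 (gaussianReal μ v) :=
        eLpNorm_one_eq_lintegral_enorm.symm
    _ ≤ eLpNorm id 2 (gaussianReal μ v) :=
        eLpNorm_le_eLpNorm_of_exponent_le one_le_two aestronglyMeasurable_id
    _ = ENNReal.ofReal √(μ ^ 2 + v) := hL2

end Gaussian

section Wedge

/-- The double wedge between the lines of slopes `c₁` and `c₂` through the origin: the pairs of
estimates `(v^a, v^b)` for which `c₁ v^a - v^b > 0` and `c₂ v^a - v^b > 0` are not equivalent. -/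
def wedge (c₁ c₂ : ℝ) : Set (ℝ × ℝ) :=
  {p | p.2 ∈ Set.Ico (min (c₁ * p.1) (c₂ * p.1)) (max (c₁ * p.1) (c₂ * p.1))}

lemma measurableSet_wedge (c₁ c₂ : ℝ) : MeasurableSet (wedge c₁ c₂) :=
  (measurableSet_le (by fun_prop) measurable_snd).inter
    (measurableSet_lt measurable_snd (by fun_prop))

lemma volume_prodMk_preimage_wedge (c₁ c₂ x : ℝ) :
    volume (Prod.mk x ⁻¹' wedge c₁ c₂) = ‖c₂ - c₁‖ₑ * ‖x‖ₑ := by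
  change volume (Set.Ico (min (c₁ * x) (c₂ * x)) (max (c₁ * x) (c₂ * x))) = _
  rw [Real.volume_Ico, max_sub_min_eq_abs, ← sub_mul, ← enorm_mul, Real.enorm_eq_ofReal_abs]

lemma prod_gaussianReal_wedge_le (P : Measure ℝ) (ν : ℝ) {w : ℝ≥0} (hw : w ≠ 0) (c₁ c₂ : ℝ) :
    P.prod (gaussianReal ν w) (wedge c₁ c₂) ≤
      ENNReal.ofReal (√(2 * π * w))⁻¹ * ‖c₂ - c₁‖ₑ * ∫⁻ x, ‖x‖ₑ ∂P := by
  rw [Measure.prod_apply (measurableSet_wedge c₁ c₂), ← lintegral_const_mul _ measurable_enorm]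
  refine lintegral_mono fun x ↦ (gaussianReal_le_mul_volume ν hw _).trans_eq ?_
  rw [volume_prodMk_preimage_wedge, ← mul_assoc]

lemma gaussianReal_prod_gaussianReal_wedge_le (μ ν : ℝ) (v : ℝ≥0) {w : ℝ≥0} (hw : w ≠ 0)
    (c₁ c₂ : ℝ) :
    (gaussianReal μ v).prod (gaussianReal ν w) (wedge c₁ c₂) ≤
      ENNReal.ofReal (|c₂ - c₁| * (√(μ ^ 2 + v) / √(2 * π * w))) := by
  calc (gaussianReal μ v).prod (gaussianReal ν w) (wedge c₁ c₂)
      ≤ ENNReal.ofReal (√(2 * π * w))⁻¹ * ‖c₂ - c₁‖ₑ * ∫⁻ x, ‖x‖ₑ ∂gaussianReal μ v :=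
        prod_gaussianReal_wedge_le _ ν hw c₁ c₂
    _ ≤ ENNReal.ofReal (√(2 * π * w))⁻¹ * ‖c₂ - c₁‖ₑ * ENNReal.ofReal √(μ ^ 2 + v) := by
        gcongr
        exact lintegral_enorm_gaussianReal_le μ v
    _ = ENNReal.ofReal (|c₂ - c₁| * (√(μ ^ 2 + v) / √(2 * π * w))) := by
        rw [Real.enorm_eq_ofReal_abs, ← ENNReal.ofReal_mul (by positivity),
          ← ENNReal.ofReal_mul (by positivity)]
        congr 1
        ring

end Wedge

section Switch

variable {m : ℕ}

instance (q : ℕ) (μa μb : Fin m → ℝ) : IsProbabilityMeasure (threshMeasure m q μa μb) := by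
  unfold threshMeasure
  infer_instance

/-- The number of items on which the allocations at the thresholds `c₁` and `c₂` differ. -/
def switchCount (c₁ c₂ : ℝ) (ω : (Fin m × Bool) → ℝ) : ℕ :=
  (Finset.univ.filter fun i ↦ xSign c₁ ω i ≠ xSign c₂ ω i).card

lemma xSign_ne_iff (c₁ c₂ : ℝ) (ω : (Fin m × Bool) → ℝ) (i : Fin m) :
    xSign c₁ ω i ≠ xSign c₂ ω i ↔ (ω (i, true), ω (i, false)) ∈ wedge c₁ c₂ := by
  simp only [xSign, wedge, Set.mem_ofPred_eq, Set.mem_Ico, min_le_iff, lt_max_iff, sub_pos]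
  split_ifs <;> norm_num <;> grind

lemma iIndepSet_xSign_ne (q : ℕ) (μa μb : Fin m → ℝ) (c₁ c₂ : ℝ) :
    iIndepSet (fun i ↦ {ω | xSign c₁ ω i ≠ xSign c₂ ω i}) (threshMeasure m q μa μb) := by
  have hpair : iIndepFun (fun i (ω : (Fin m × Bool) → ℝ) ↦ (ω (i, true), ω (i, false)))
      (threshMeasure m q μa μb) :=
    (iIndepFun_curry_pi _).comp (fun _ f ↦ (f true, f false)) fun _ ↦ by fun_prop
  simp only [xSign_ne_iff]
  refine (iIndepSet_iff_meas_biInter fun i ↦ ?_).mpr fun S ↦ hpair.meas_biInter fun i _ ↦ ?_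
  · exact (measurableSet_wedge c₁ c₂).preimage (by fun_prop)
  · exact ⟨_, measurableSet_wedge c₁ c₂, rfl⟩

lemma threshMeasure_xSign_ne_le {q : ℕ} (μa μb : Fin m → ℝ)
    (hmq : (m : ℝ≥0) / q ≠ 0) (c₁ c₂ : ℝ) (i : Fin m) :
    threshMeasure m q μa μb {ω | xSign c₁ ω i ≠ xSign c₂ ω i} ≤
      ENNReal.ofReal (|c₂ - c₁| *
        (√(μa i ^ 2 + ((m : ℝ≥0) / q : ℝ≥0)) / √(2 * π * ((m : ℝ≥0) / q : ℝ≥0)))) := by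
  have hlaw := measurePreserving_eval_prodMk_pi
    (fun p : Fin m × Bool ↦ gaussianReal (if p.2 then μa p.1 else μb p.1) ((m : ℝ≥0) / q))
    (i := (i, true)) (j := (i, false)) (by simp)
  simp only [xSign_ne_iff]
  exact (hlaw.measure_preimage (measurableSet_wedge c₁ c₂).nullMeasurableSet).trans_le
    (gaussianReal_prod_gaussianReal_wedge_le _ _ _ hmq c₁ c₂)

lemma threshMeasure_le_switchCount_le {q : ℕ} {μa μb : Fin m → ℝ} {c₁ c₂ : ℝ} {p : ℝ≥0∞}
    (hp : ∀ i, threshMeasure m q μa μb {ω | xSign c₁ ω i ≠ xSign c₂ ω i} ≤ p) (r : ℕ) :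
    threshMeasure m q μa μb {ω | r ≤ switchCount c₁ c₂ ω} ≤ m.choose r * p ^ r := by
  simpa [switchCount] using
    measure_le_card_filter_mem_le_of_iIndepSet (iIndepSet_xSign_ne q μa μb c₁ c₂) hp r

end Switch

section Grid

lemma sqrt_sq_add_div_sqrt_le {μ v M : ℝ} (hμ : |μ| ≤ 1) (hv : v ≤ 1) (hM : 0 ≤ M)
    (hvM : 1 ≤ M ^ 2 * v) : √(μ ^ 2 + v) / √(2 * π * v) ≤ M := by
  have hv0 : 0 < v := pos_of_mul_pos_right (zero_lt_one.trans_le hvM) (sq_nonneg M)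
  rw [← Real.sqrt_div' _ (by positivity), Real.sqrt_le_left hM, div_le_iff₀ (by positivity)]
  have hμ2 : μ ^ 2 ≤ 1 := (sq_le_one_iff_abs_le_one μ).mpr hμ
  have hπ : 1 * 1 ≤ π * (M ^ 2 * v) :=
    mul_le_mul (by linarith [Real.pi_gt_three]) hvM zero_le_one (by positivity)
  linarith

variable {m q : ℕ} {μa : Fin m → ℝ} (μb : Fin m → ℝ)

lemma threshMeasure_xSign_ne_grid_le (hm : 0 < m) (hq : q ∈ Set.Icc m (m ^ 3))
    (hμa : ∀ i, |μa i| ≤ 1) (k : ℕ) (i : Fin m) :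
    threshMeasure m q μa μb
        {ω | xSign ((k : ℝ) / (m : ℝ) ^ 3) ω i ≠ xSign (((k : ℝ) + 1) / (m : ℝ) ^ 3) ω i} ≤
      ENNReal.ofReal ((m : ℝ) ^ 2)⁻¹ := by
  have hm0 : (0 : ℝ) < m := by exact_mod_cast hm
  have hq0 : 0 < q := hm.trans_le hq.1
  have hv : (m : ℝ) / q ≤ 1 := (div_le_one (by positivity)).mpr (by exact_mod_cast hq.1)
  have hvm : 1 ≤ (m : ℝ) ^ 2 * (m / q) := by
    rw [← mul_div_assoc, one_le_div (by positivity), ← pow_succ]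
    exact_mod_cast hq.2
  refine (threshMeasure_xSign_ne_le μa μb (by positivity) _ _ i).trans
    (ENNReal.ofReal_le_ofReal ?_)
  calc |((k : ℝ) + 1) / (m : ℝ) ^ 3 - k / (m : ℝ) ^ 3| *
        (√(μa i ^ 2 + ((m : ℝ≥0) / q : ℝ≥0)) / √(2 * π * ((m : ℝ≥0) / q : ℝ≥0)))
      ≤ ((m : ℝ) ^ 3)⁻¹ * m := by
        gcongr
        · rw [← sub_div, add_sub_cancel_left, one_div, abs_of_pos (by positivity)]
        · push_cast
          exact sqrt_sq_add_div_sqrt_le (hμa i) hv hm0.le hvm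
    _ = ((m : ℝ) ^ 2)⁻¹ := by field_simp

lemma threshMeasure_exists_seven_le_switchCount_le (hm : 0 < m) (hq : q ∈ Set.Icc m (m ^ 3))
    (hμa : ∀ i, |μa i| ≤ 1) :
    threshMeasure m q μa μb {ω | ∃ k < m ^ 6,
        7 ≤ switchCount ((k : ℝ) / (m : ℝ) ^ 3) (((k : ℝ) + 1) / (m : ℝ) ^ 3) ω} ≤
      (m : ℝ≥0∞)⁻¹ := by
  have hm0 : (0 : ℝ) < m := by exact_mod_cast hm
  have hunion : {ω : (Fin m × Bool) → ℝ | ∃ k < m ^ 6,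
        7 ≤ switchCount ((k : ℝ) / (m : ℝ) ^ 3) (((k : ℝ) + 1) / (m : ℝ) ^ 3) ω} =
      ⋃ k ∈ Finset.range (m ^ 6),
        {ω | 7 ≤ switchCount ((k : ℝ) / (m : ℝ) ^ 3) (((k : ℝ) + 1) / (m : ℝ) ^ 3) ω} := by
    ext ω
    simp
  rw [hunion]
  calc threshMeasure m q μa μb (⋃ k ∈ Finset.range (m ^ 6),
        {ω | 7 ≤ switchCount ((k : ℝ) / (m : ℝ) ^ 3) (((k : ℝ) + 1) / (m : ℝ) ^ 3) ω})
      ≤ ∑ _k ∈ Finset.range (m ^ 6), m.choose 7 * ENNReal.ofReal ((m : ℝ) ^ 2)⁻¹ ^ 7 :=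
        (measure_biUnion_finset_le _ _).trans <| Finset.sum_le_sum fun k _ ↦
          threshMeasure_le_switchCount_le (threshMeasure_xSign_ne_grid_le μb hm hq hμa k) 7
    _ ≤ (m ^ 6 : ℕ) * ((m ^ 7 : ℕ) * ENNReal.ofReal ((m : ℝ) ^ 2)⁻¹ ^ 7) := by
        rw [Finset.sum_const, Finset.card_range, nsmul_eq_mul]
        gcongr
        exact Nat.choose_le_pow m 7
    _ = ENNReal.ofReal ((m ^ 6 : ℕ) * ((m ^ 7 : ℕ) * (((m : ℝ) ^ 2)⁻¹) ^ 7)) := by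
        rw [ENNReal.ofReal_mul (by positivity), ENNReal.ofReal_mul (by positivity),
          ENNReal.ofReal_pow (by positivity), ENNReal.ofReal_natCast, ENNReal.ofReal_natCast]
    _ = ENNReal.ofReal (m : ℝ)⁻¹ := by
        congr 1
        push_cast
        field_simp
    _ = (m : ℝ≥0∞)⁻¹ := by rw [ENNReal.ofReal_inv_of_pos hm0, ENNReal.ofReal_natCast]

end Grid

section SampleSize

lemma rpow_div_sq_mul_log_le {x D : ℝ} (hx : 0 < x) (hlog : 1 ≤ Real.log x)
    (hD : x ^ ((1 : ℝ) / 4) * Real.log x ^ 2 ≤ D) :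
    x ^ ((3 : ℝ) / 2) / D ^ 2 * Real.log x ≤ x := by
  have hDpos : 0 < D := lt_of_lt_of_le (by positivity) hD
  rw [div_mul_eq_mul_div, div_le_iff₀ (by positivity)]
  calc x ^ ((3 : ℝ) / 2) * Real.log x ≤ x ^ ((3 : ℝ) / 2) * Real.log x ^ 4 := by
        gcongr
        exact le_self_pow₀ hlog four_ne_zero
    _ = x * (x ^ ((1 : ℝ) / 4) * Real.log x ^ 2) ^ 2 := by
        have hpow : x ^ ((3 : ℝ) / 2) = x * (x ^ ((1 : ℝ) / 4)) ^ 2 := by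
          rw [← Real.rpow_natCast, ← Real.rpow_mul hx.le, ← Real.rpow_one_add' hx.le] <;> norm_num
        rw [hpow]
        ring
    _ ≤ x * D ^ 2 := by gcongr

lemma eventually_le_log_natCast (c : ℝ) : ∀ᶠ m : ℕ in atTop, c ≤ Real.log m :=
  (Real.tendsto_log_atTop.comp tendsto_natCast_atTop_atTop).eventually_ge_atTop c

lemma eventually_sampleSize_mem_Icc {Δ : ℕ → ℝ}
    (hΔ : ∀ᶠ m : ℕ in atTop, (m : ℝ) ^ ((1 : ℝ) / 4) * Real.log m ^ 2 ≤ Δ m) {q : ℕ → ℕ}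
    (hq : ∀ m : ℕ,
      q m = m * ⌈15 * ((m : ℝ) ^ ((3 : ℝ) / 2) / Δ m ^ 2) * Real.log m + Real.log m ^ 2⌉₊) :
    ∀ᶠ m in atTop, q m ∈ Set.Icc m (m ^ 3) := by
  have hlogsq : ∀ᶠ m : ℕ in atTop, Real.log m ^ 2 ≤ m := by
    filter_upwards [tendsto_natCast_atTop_atTop.eventually
      (isLittleO_pow_log_id_atTop (n := 2) |>.bound one_pos)] with m hm
    simpa using hm
  filter_upwards [hΔ, eventually_le_log_natCast 1, hlogsq, eventually_ge_atTop 16]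
    with m hD h1 h2 hm
  have hm' : (16 : ℝ) ≤ m := by exact_mod_cast hm
  have hmain := rpow_div_sq_mul_log_le (by linarith) h1 hD
  have hpos : 0 < 15 * ((m : ℝ) ^ ((3 : ℝ) / 2) / Δ m ^ 2) * Real.log m + Real.log m ^ 2 := by
    positivity
  rw [hq, pow_succ', Set.mem_Icc]
  refine ⟨Nat.le_mul_of_pos_right m (Nat.ceil_pos.mpr hpos),
    Nat.mul_le_mul_left m (Nat.ceil_le.mpr ?_)⟩
  push_cast
  nlinarith

end SampleSize

theorem stmt15_general (q : ℕ → ℕ) (hq : ∀ᶠ m in atTop, q m ∈ Set.Icc m (m ^ 3))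
    (t : ℕ → ℝ) (ht : ∀ᶠ m in atTop, 6 ≤ t m)
    (μa μb : (m : ℕ) → Fin m → ℝ) (hμa : ∀ m i, |μa m i| ≤ 1) :
    Tendsto (fun m : ℕ =>
        (threshMeasure m (q m) (μa m) (μb m)
            {ω | ∀ k : ℕ, 1 ≤ k → k + 1 ≤ m ^ 6 →
                ((Finset.univ.filter fun i : Fin m =>
                    xSign ((k : ℝ) / (m : ℝ) ^ 3) ω i ≠
                      xSign (((k : ℝ) + 1) / (m : ℝ) ^ 3) ω i).card : ℝ) ≤
                  t m}).toReal)
      atTop (nhds 1) := by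
  refine tendsto_toReal_measure_of_tendsto_measure_compl <|
    tendsto_of_tendsto_of_tendsto_of_le_of_le' tendsto_const_nhds
      ENNReal.tendsto_inv_nat_nhds_zero (.of_forall fun _ ↦ zero_le) ?_
  filter_upwards [hq, ht, eventually_gt_atTop 0] with m hqm htm hm
  refine (measure_mono fun ω hω ↦ ?_).trans
    (threshMeasure_exists_seven_le_switchCount_le (μb m) hm hqm (hμa m))
  simp only [Set.mem_compl_iff, Set.mem_ofPred_eq, not_forall, not_le] at hω
  obtain ⟨k, -, hk, hcard⟩ := hω
  have hsix : (6 : ℝ) < switchCount ((k : ℝ) / (m : ℝ) ^ 3) (((k : ℝ) + 1) / (m : ℝ) ^ 3) ω :=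
    htm.trans_lt hcard
  exact ⟨k, hk, by exact_mod_cast hsix⟩

/-- in the thresholding allocation model with
`q(m) = m ⌈15 (m^{3/2}/Δ(m)²) log m + (log m)²⌉`, the probability that every pair of
consecutive grid points `c₁ = k/m³`, `c₂ = (k+1)/m³` has at most `log m` items `i` with
`x_i(c₁) ≠ x_i(c₂)` tends to `1`. -/
theorem stmt15 (Δ : ℕ → ℝ)
    (hΔ1 : ∀ᶠ m : ℕ in atTop, (m : ℝ) ^ ((1 : ℝ) / 4) * Real.log m ^ 2 ≤ Δ m)
    (hΔ2 : Tendsto (fun m : ℕ => Δ m * Real.log m / m) atTop (nhds 0))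
    (q : ℕ → ℕ)
    (hq : ∀ m : ℕ,
      q m = m * ⌈15 * ((m : ℝ) ^ ((3 : ℝ) / 2) / Δ m ^ 2) * Real.log m + Real.log m ^ 2⌉₊)
    (μa μb : (m : ℕ) → Fin m → ℝ)
    (hμa : ∀ m i, μa m i ∈ Set.Icc (0 : ℝ) 1) (hμb : ∀ m i, μb m i ∈ Set.Icc (0 : ℝ) 1) :
    Tendsto (fun m : ℕ =>
        (threshMeasure m (q m) (μa m) (μb m)
            {ω | ∀ k : ℕ, 1 ≤ k → k + 1 ≤ m ^ 6 →
                ((Finset.univ.filter fun i : Fin m =>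
                    xSign ((k : ℝ) / (m : ℝ) ^ 3) ω i ≠
                      xSign (((k : ℝ) + 1) / (m : ℝ) ^ 3) ω i).card : ℝ) ≤
                  Real.log m}).toReal)
      atTop (nhds 1) := by
  exact stmt15_general q (eventually_sampleSize_mem_Icc hΔ1 hq) _ (eventually_le_log_natCast 6)
    μa μb fun m i ↦ (abs_of_nonneg (hμa m i).1).trans_le (hμa m i).2
end
end
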